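/- For every integer n with 1 ≤ n ≤ 41, fₙ > 0 if n mod 6 ∈ {1, 2, 3}, and fₙ < 0 if n mod 6 ∈ {4, 5, 0}. -/

import Mathlib

open scoped Classical in
/-- The number of peaks of a permutation of `Fin n` (0-indexed: a peak is an
index `i` with `1 ≤ i ≤ n-2` such that `π (i-1) < π i > π (i+1)`;
this matches the 1-indexed condition `2 ≤ i ≤ n-1` of the paper). -/
noncomputable def numPeaks {n : ℕ} (π : Equiv.Perm (Fin n)) : ℕ :=
  (Finset.univ.filter fun i : Fin n =>
    ∃ (_ : 1 ≤ (i : ℕ)) (h2 : (i : ℕ) + 1 < n),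
      π ⟨(i : ℕ) - 1, Nat.lt_of_le_of_lt (Nat.sub_le _ _) i.isLt⟩ < π i ∧
      π ⟨(i : ℕ) + 1, h2⟩ < π i).card

/-- The peak polynomial `Pₙ(t) = ∑_{π ∈ Sₙ} t^(pk π)`, evaluated at `t : ℝ`. -/
noncomputable def peakPoly (n : ℕ) (t : ℝ) : ℝ :=
  ∑ π : Equiv.Perm (Fin n), t ^ numPeaks π

/-- `fₙ = Pₙ(-1)`. -/
noncomputable def f (n : ℕ) : ℝ := peakPoly n (-1)

/-- peak positions of a word given as a function on ℕ -/
def pkSet (n : ℕ) (w : ℕ → ℕ) : Finset ℕ :=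
  (Finset.range n).filter fun i => 1 ≤ i ∧ i + 1 < n ∧ w (i - 1) < w i ∧ w (i + 1) < w i

def insW (w : ℕ → ℕ) (p M : ℕ) : ℕ → ℕ := fun j =>
  if j < p then w j else if j = p then M else w (j - 1)

def wd {n : ℕ} (π : Equiv.Perm (Fin n)) : ℕ → ℕ := fun i =>
  if h : i < n then (π ⟨i, h⟩ : ℕ) else 0

theorem mem_pkSet (n : ℕ) (w : ℕ → ℕ) (i : ℕ) :
    i ∈ pkSet n w ↔ (1 ≤ i ∧ i + 1 < n ∧ w (i - 1) < w i ∧ w (i + 1) < w i) := by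
  simp only [pkSet, Finset.mem_filter, Finset.mem_range]
  constructor
  · exact fun h => h.2
  · exact fun h => ⟨by omega, h⟩

theorem numPeaks_eq {n : ℕ} (π : Equiv.Perm (Fin n)) :
    numPeaks π = (pkSet n (wd π)).card := by
  classical
  unfold numPeaks
  refine Finset.card_bij (fun i _ => (i : ℕ)) ?_ ?_ ?_
  · intro i hi
    simp only [Finset.mem_filter, Finset.mem_univ, true_and] at hi
    obtain ⟨h1, h2, h3, h4⟩ := hi
    rw [mem_pkSet]
    refine ⟨h1, h2, ?_, ?_⟩
    · simp only [wd]
      rw [dif_pos (by omega), dif_pos i.isLt]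
      exact h3
    · simp only [wd]
      rw [dif_pos h2, dif_pos i.isLt]
      exact h4
  · intro a _ b _ h
    exact Fin.ext h
  · intro b hb
    rw [mem_pkSet] at hb
    obtain ⟨h1, h2, h3, h4⟩ := hb
    refine ⟨⟨b, by omega⟩, ?_, rfl⟩
    simp only [Finset.mem_filter, Finset.mem_univ, true_and]
    simp only [wd] at h3 h4
    rw [dif_pos (by omega), dif_pos (by omega)] at h3
    rw [dif_pos h2, dif_pos (by omega)] at h4
    exact ⟨h1, h2, h3, h4⟩

theorem pkSet_ins (n : ℕ) (w : ℕ → ℕ) (p M : ℕ) (hw : ∀ j, w j < M) (hp : p ≤ n) :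
    pkSet (n + 1) (insW w p M) =
      (((pkSet n w).filter fun i => i ≠ p ∧ i + 1 ≠ p).image
        fun i => if i < p then i else i + 1) ∪ (if 0 < p ∧ p < n then {p} else ∅) := by
  ext i
  rw [Finset.mem_union, Finset.mem_image, mem_pkSet]
  have h2 : i ∈ (if 0 < p ∧ p < n then ({p} : Finset ℕ) else ∅) ↔ (0 < p ∧ p < n ∧ i = p) := by
    split_ifs with h <;> simp <;> omega
  rw [h2]
  simp only [Finset.mem_filter, mem_pkSet]
  have key : (∃ a, ((1 ≤ a ∧ a + 1 < n ∧ w (a - 1) < w a ∧ w (a + 1) < w a) ∧ a ≠ p ∧ a + 1 ≠ p) ∧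
      (if a < p then a else a + 1) = i) ↔
      ((i + 1 < p ∧ (1 ≤ i ∧ i + 1 < n ∧ w (i - 1) < w i ∧ w (i + 1) < w i)) ∨
       (p + 1 < i ∧ (1 ≤ i - 1 ∧ i - 1 + 1 < n ∧ w (i - 1 - 1) < w (i - 1)
          ∧ w (i - 1 + 1) < w (i - 1)))) := by
    constructor
    · rintro ⟨a, ⟨h, h3, h4⟩, h5⟩
      split_ifs at h5 with h6
      · subst h5; left; exact ⟨by omega, h⟩
      · subst h5; right; exact ⟨by omega, by simpa using h⟩
    · rintro (⟨h, h3⟩ | ⟨h, h3⟩)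
      · exact ⟨i, ⟨h3, by omega, by omega⟩, by rw [if_pos (by omega)]⟩
      · exact ⟨i - 1, ⟨h3, by omega, by omega⟩, by rw [if_neg (by omega)]; omega⟩
  rw [key]
  rcases Nat.eq_zero_or_pos i with h0 | h0
  · subst h0; omega
  obtain ⟨i, rfl⟩ : ∃ k, i = k + 1 := ⟨i - 1, by omega⟩
  have m0 := hw i
  have m1 := hw (i - 1)
  have m2 := hw (i + 1)
  have m3 := hw (i + 1 + 1)
  simp only [insW, Nat.add_sub_cancel]
  rcases Nat.lt_trichotomy (i + 2) p with h | h | h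
  · rw [if_pos (by omega), if_pos (by omega), if_pos (by omega)]; omega
  · rw [if_pos (by omega), if_pos (by omega), if_neg (by omega), if_pos (by omega)]; omega
  rcases Nat.lt_trichotomy (i + 1) p with h' | h' | h'
  · omega
  · rw [if_pos (by omega), if_neg (by omega), if_pos (by omega), if_neg (by omega),
      if_neg (by omega)]; omega
  rcases Nat.lt_trichotomy i p with h'' | h'' | h''
  · omega
  · rw [if_neg (by omega), if_pos (by omega), if_neg (by omega), if_neg (by omega)]; omega
  · have e : i - 1 + 1 = i := by omega
    rw [if_neg (by omega), if_neg (by omega), if_neg (by omega), if_neg (by omega),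
      if_neg (by omega), if_neg (by omega)]; omega

def badSet (n : ℕ) (w : ℕ → ℕ) : Finset ℕ :=
  ({0, n} : Finset ℕ) ∪ (pkSet n w ∪ (pkSet n w).image (· + 1))

theorem badSet_card (n : ℕ) (hn : 1 ≤ n) (w : ℕ → ℕ) :
    (badSet n w).card = 2 * (pkSet n w).card + 2 := by
  unfold badSet
  rw [Finset.card_union_of_disjoint, Finset.card_union_of_disjoint,
    Finset.card_image_of_injective _ (add_left_injective 1), Finset.card_pair (by omega)]
  · ring
  · rw [Finset.disjoint_left]
    intro a ha hb
    rw [Finset.mem_image] at hb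
    obtain ⟨b, hb, rfl⟩ := hb
    rw [mem_pkSet] at ha hb
    simp only [Nat.add_sub_cancel] at ha
    omega
  · rw [Finset.disjoint_left]
    intro a ha hb
    simp only [Finset.mem_union, Finset.mem_image, mem_pkSet] at hb
    simp only [Finset.mem_insert, Finset.mem_singleton] at ha
    rcases hb with h | ⟨b, h, rfl⟩ <;> omega

theorem pkSet_ins_card (n : ℕ) (w : ℕ → ℕ) (p M : ℕ) (hw : ∀ j, w j < M) (hp : p ≤ n) :
    (pkSet (n + 1) (insW w p M)).card =
      if p ∈ badSet n w then (pkSet n w).card else (pkSet n w).card + 1 := by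
  rw [pkSet_ins n w p M hw hp, Finset.card_union_of_disjoint, Finset.card_image_of_injective]
  · have hb : p ∈ badSet n w ↔ (p = 0 ∨ p = n ∨ p ∈ pkSet n w ∨ (1 ≤ p ∧ p - 1 ∈ pkSet n w)) := by
      simp only [badSet, Finset.mem_union, Finset.mem_insert, Finset.mem_singleton,
        Finset.mem_image]
      constructor
      · rintro ((h | h) | h | ⟨b, h, rfl⟩)
        · simp [h]
        · simp [h]
        · simp [h]
        · right; right; right; exact ⟨by omega, by simpa using h⟩
      · rintro (h | h | h | ⟨h, h'⟩)
        · simp [h]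
        · simp [h]
        · simp [h]
        · right; right; exact ⟨p - 1, h', by omega⟩
    by_cases h1 : p ∈ pkSet n w
    · have hF : ((pkSet n w).filter fun i => i ≠ p ∧ i + 1 ≠ p) = (pkSet n w).erase p := by
        ext i
        simp only [Finset.mem_filter, Finset.mem_erase]
        constructor
        · tauto
        · rintro ⟨a, b⟩
          refine ⟨b, a, ?_⟩
          rintro rfl
          rw [mem_pkSet] at b h1
          simp only [Nat.add_sub_cancel] at h1
          omega
      rw [hF, if_pos (hb.mpr (Or.inr (Or.inr (Or.inl h1)))), Finset.card_erase_of_mem h1]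
      have := Finset.card_pos.mpr ⟨p, h1⟩
      rw [mem_pkSet] at h1
      rw [if_pos (by omega)]
      simp only [Finset.card_singleton]
      omega
    · by_cases h2 : 1 ≤ p ∧ p - 1 ∈ pkSet n w
      · have hF : ((pkSet n w).filter fun i => i ≠ p ∧ i + 1 ≠ p) = (pkSet n w).erase (p - 1) := by
          ext i
          simp only [Finset.mem_filter, Finset.mem_erase]
          constructor
          · rintro ⟨a, b, c⟩
            exact ⟨by omega, a⟩
          · rintro ⟨a, b⟩
            refine ⟨b, ?_, by omega⟩
            rintro rfl
            exact h1 b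
        rw [hF, if_pos (hb.mpr (Or.inr (Or.inr (Or.inr h2)))), Finset.card_erase_of_mem h2.2]
        have := Finset.card_pos.mpr ⟨p - 1, h2.2⟩
        rw [mem_pkSet] at h2
        rw [if_pos (by omega)]
        simp only [Finset.card_singleton]
        omega
      · have hF : ((pkSet n w).filter fun i => i ≠ p ∧ i + 1 ≠ p) = pkSet n w := by
          rw [Finset.filter_eq_self]
          intro i hi
          constructor
          · rintro rfl; exact h1 hi
          · rintro rfl; exact h2 ⟨by omega, by simpa using hi⟩
        rw [hF]
        by_cases h3 : 0 < p ∧ p < n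
        · rw [if_pos h3, if_neg]
          · simp
          · rw [hb]; rintro (h | h | h | h)
            · omega
            · omega
            · exact h1 h
            · exact h2 h
        · rw [if_neg h3, if_pos]
          · simp
          · rw [hb]; omega
  · intro a b h
    simp only at h
    split_ifs at h <;> omega
  · rw [Finset.disjoint_left]
    intro a ha hb
    simp only [Finset.mem_image, Finset.mem_filter] at ha
    obtain ⟨b, ⟨_, h1, h2⟩, h3⟩ := ha
    split_ifs at hb h3 <;> simp at hb <;> omega

theorem sum_ins (n : ℕ) (hn : 1 ≤ n) (w : ℕ → ℕ) (M : ℕ) (hw : ∀ j, w j < M) (g : ℕ → ℝ) :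
    ∑ p ∈ Finset.range (n + 1), g (pkSet (n + 1) (insW w p M)).card =
      (2 * (pkSet n w).card + 2) * g (pkSet n w).card
        + ((n : ℝ) - 1 - 2 * (pkSet n w).card) * g ((pkSet n w).card + 1) := by
  have hsub : badSet n w ⊆ Finset.range (n + 1) := by
    intro a ha
    simp only [badSet, Finset.mem_union, Finset.mem_image, mem_pkSet, Finset.mem_insert,
      Finset.mem_singleton] at ha
    rw [Finset.mem_range]
    rcases ha with (h | h) | h | ⟨b, h, rfl⟩ <;> omega
  have hc := badSet_card n hn w
  have h1 : ∑ p ∈ Finset.range (n + 1), g (pkSet (n + 1) (insW w p M)).card =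
      ∑ p ∈ Finset.range (n + 1),
        if p ∈ badSet n w then g (pkSet n w).card else g ((pkSet n w).card + 1) := by
    refine Finset.sum_congr rfl fun p hp => ?_
    rw [pkSet_ins_card n w p M hw (by simpa [Nat.lt_succ_iff] using hp)]
    split_ifs <;> rfl
  rw [h1, ← Finset.sum_sdiff hsub]
  rw [Finset.sum_congr rfl (g := fun _ => g ((pkSet n w).card + 1))
      (fun p hp => if_neg (Finset.mem_sdiff.mp hp).2),
    Finset.sum_congr (s₁ := badSet n w) rfl (g := fun _ => g (pkSet n w).card)
      (fun p hp => if_pos hp)]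
  rw [Finset.sum_const, Finset.sum_const, nsmul_eq_mul, nsmul_eq_mul,
    Finset.card_sdiff_of_subset hsub, Nat.cast_sub (Finset.card_le_card hsub), hc,
    Finset.card_range]
  push_cast
  ring

def insP {n : ℕ} (x : Equiv.Perm (Fin n) × Fin (n + 1)) : Equiv.Perm (Fin (n + 1)) :=
  (finSuccEquiv' x.2).trans ((Equiv.optionCongr x.1).trans (finSuccEquiv' (Fin.last n)).symm)

theorem insP_at {n : ℕ} (π : Equiv.Perm (Fin n)) (p : Fin (n + 1)) :
    insP (π, p) p = Fin.last n := by
  simp [insP]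

theorem insP_above {n : ℕ} (π : Equiv.Perm (Fin n)) (p : Fin (n + 1)) (i : Fin n) :
    insP (π, p) (p.succAbove i) = (π i).castSucc := by
  simp [insP]

theorem insP_bij (n : ℕ) : Function.Bijective (insP (n := n)) := by
  rw [Fintype.bijective_iff_injective_and_card]
  constructor
  · rintro ⟨π, p⟩ ⟨ρ, q⟩ h
    have hpq : p = q := by
      apply (insP (ρ, q)).injective
      rw [insP_at, ← h, insP_at]
    subst hpq
    have : π = ρ := by
      ext i
      have := insP_above π p i
      rw [h, insP_above] at this
      exact congrArg Fin.val (Fin.castSucc_injective _ this).symm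
    rw [this]
  · simp [Fintype.card_perm, Nat.factorial_succ, mul_comm]

theorem wd_insP {n : ℕ} (π : Equiv.Perm (Fin n)) (p : Fin (n + 1)) (j : ℕ) (hj : j < n + 1) :
    wd (insP (π, p)) j = insW (wd π) p n j := by
  simp only [wd, insW]
  rw [dif_pos hj]
  by_cases h : j < (p : ℕ)
  · have hjn : j < n := by omega
    rw [if_pos h, dif_pos hjn]
    have e : (⟨j, hj⟩ : Fin (n + 1)) = p.succAbove ⟨j, hjn⟩ := by
      rw [Fin.succAbove_of_castSucc_lt _ _ (by simpa [Fin.lt_def] using h)]; rfl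
    rw [e, insP_above]; rfl
  · rw [if_neg h]
    by_cases h' : j = (p : ℕ)
    · rw [if_pos h']
      have e : (⟨j, hj⟩ : Fin (n + 1)) = p := Fin.ext h'
      rw [e, insP_at]; rfl
    · have hjn : j - 1 < n := by omega
      rw [if_neg h', dif_pos hjn]
      have e : (⟨j, hj⟩ : Fin (n + 1)) = p.succAbove ⟨j - 1, hjn⟩ := by
        rw [Fin.succAbove_of_le_castSucc _ _ (by simp [Fin.le_def]; omega)]
        apply Fin.ext; simp; omega
      rw [e, insP_above]; rfl

theorem pkSet_congr (n : ℕ) (w v : ℕ → ℕ) (h : ∀ j, j < n → w j = v j) :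
    pkSet n w = pkSet n v := by
  ext i
  rw [mem_pkSet, mem_pkSet]
  by_cases h2 : i + 1 < n
  · rw [h i (by omega), h (i + 1) h2, h (i - 1) (by omega)]
  · tauto

theorem sum_step (n : ℕ) (hn : 1 ≤ n) (g : ℕ → ℝ) :
    ∑ σ : Equiv.Perm (Fin (n + 1)), g (numPeaks σ) =
      ∑ π : Equiv.Perm (Fin n), ((2 * (numPeaks π : ℝ) + 2) * g (numPeaks π)
        + ((n : ℝ) - 1 - 2 * (numPeaks π : ℝ)) * g (numPeaks π + 1)) := by
  rw [← (insP_bij n).sum_comp (fun σ => g (numPeaks σ)), Fintype.sum_prod_type]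
  refine Finset.sum_congr rfl fun π _ => ?_
  have hw : ∀ j, wd π j < n := by
    intro j
    simp only [wd]
    split_ifs
    · exact Fin.isLt _
    · omega
  rw [numPeaks_eq π, ← sum_ins n hn (wd π) n hw g, Finset.sum_range]
  refine Finset.sum_congr rfl fun p _ => ?_
  rw [numPeaks_eq, pkSet_congr _ _ _ (wd_insP π p)]

def stepL (n : ℤ) : ℤ → ℤ → List ℤ → List ℤ
  | _, c, [] => [c]
  | j, c, a :: l => ((2 * j + 2) * a + c) :: stepL n (j + 1) ((n - 1 - 2 * j) * a) l

def rowL : ℕ → List ℤ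
  | 0 => [1]
  | n + 1 => stepL (n + 1) 0 0 (rowL n)

noncomputable def evL (g : ℕ → ℝ) : ℕ → List ℤ → ℝ
  | _, [] => 0
  | j, a :: l => a * g j + evL g (j + 1) l

theorem evL_step (n : ℕ) (g : ℕ → ℝ) (l : List ℤ) : ∀ (j : ℕ) (c : ℤ),
    evL g j (stepL n j c l) = c * g j +
      evL (fun k => (2 * (k : ℝ) + 2) * g k + ((n : ℝ) - 1 - 2 * (k : ℝ)) * g (k + 1)) j l := by
  induction l with
  | nil => intro j c; simp [stepL, evL]
  | cons a l ih =>
    intro j c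
    have := ih (j + 1) (((n : ℤ) - 1 - 2 * j) * a)
    push_cast at this
    simp only [stepL, evL]
    rw [this]
    push_cast
    ring

theorem sum_eq_evL (n : ℕ) : ∀ g : ℕ → ℝ,
    ∑ σ : Equiv.Perm (Fin (n + 1)), g (numPeaks σ) = evL g 0 (rowL n) := by
  induction n with
  | zero =>
    intro g
    have h : ∀ σ : Equiv.Perm (Fin 1), numPeaks σ = 0 := by
      intro σ
      rw [numPeaks_eq, Finset.card_eq_zero, Finset.eq_empty_iff_forall_notMem]
      intro i hi
      rw [mem_pkSet] at hi
      omega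
    simp [h, rowL, evL]
  | succ n ih =>
    intro g
    rw [sum_step (n + 1) (by omega) g,
      ih (fun k => (2 * (k : ℝ) + 2) * g k + (((n + 1 : ℕ) : ℝ) - 1 - 2 * (k : ℝ)) * g (k + 1))]
    have := evL_step (n + 1) g (rowL n) 0 0
    push_cast at this
    simp only [rowL]
    push_cast
    rw [this]
    ring

def altL : List ℤ → ℤ
  | [] => 0
  | a :: l => a - altL l

theorem evL_alt (l : List ℤ) : ∀ j : ℕ,
    evL (fun k => (-1 : ℝ) ^ k) j l = (-1) ^ j * (altL l : ℝ) := by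
  induction l with
  | nil => intro j; simp [evL, altL]
  | cons a l ih => intro j; simp only [evL, altL]; rw [ih]; push_cast; ring

theorem f_eq (n : ℕ) : f (n + 1) = (altL (rowL n) : ℝ) := by
  unfold f peakPoly
  rw [sum_eq_evL n (fun k => (-1 : ℝ) ^ k), evL_alt]
  simp

theorem alt_signs : ∀ n < 41,
    (((n + 1) % 6 = 1 ∨ (n + 1) % 6 = 2 ∨ (n + 1) % 6 = 3) → 0 < altL (rowL n)) ∧
    (((n + 1) % 6 = 4 ∨ (n + 1) % 6 = 5 ∨ (n + 1) % 6 = 0) → altL (rowL n) < 0) := by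
  decide +kernel

/-- For `1 ≤ n ≤ 41`, `fₙ > 0` if `n mod 6 ∈ {1,2,3}` and `fₙ < 0` if
`n mod 6 ∈ {4,5,0}`. -/
theorem f_sign_pattern_up_to_41 :
    ∀ n : ℕ, 1 ≤ n → n ≤ 41 →
      ((n % 6 = 1 ∨ n % 6 = 2 ∨ n % 6 = 3) → 0 < f n) ∧
      ((n % 6 = 4 ∨ n % 6 = 5 ∨ n % 6 = 0) → f n < 0) := by
  intro n h1 h2
  obtain ⟨m, rfl⟩ : ∃ m, n = m + 1 := ⟨n - 1, by omega⟩
  rw [f_eq]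
  have := alt_signs m (by omega)
  exact ⟨fun h => by exact_mod_cast this.1 h, fun h => by exact_mod_cast this.2 h⟩
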